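/- (Death of rotation numbers) Let (θ_1,...,θ_N) be a global solution of the Winfree model of order n with 0 < α < π, |θ_i(0)| < α for every i, and κ > (max_i |ν_i|)/(a_n sin α (1 + cos α)^n). Then every oscillator has rotation number zero: for every index i, lim_{t → ∞} θ_i(t)/t = 0. -/

import Mathlib

open Real Filter

/-- Normalizing constant `a_n = 2^n (n!)^2 / (2n)!`. -/
noncomputable def aW (n : ℕ) : ℝ :=
  2 ^ n * (Nat.factorial n : ℝ) ^ 2 / (Nat.factorial (2 * n) : ℝ)

/-- Influence function `I_n(θ) = a_n (1 + cos θ)^n`. -/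
noncomputable def influence (n : ℕ) (θ : ℝ) : ℝ := aW n * (1 + Real.cos θ) ^ n

/-- Sensitivity function `S(θ) = -sin θ`. -/
noncomputable def sens (θ : ℝ) : ℝ := -Real.sin θ

/-- A global solution of the Winfree model of order `n` with `N` oscillators,
natural frequencies `ν` and coupling strength `κ`:
`θ_i'(t) = ν_i + (κ/N) S(θ_i(t)) Σ_j I_n(θ_j(t))` for all `t ≥ 0`. -/
def IsWinfreeSol (n N : ℕ) (ν : Fin N → ℝ) (κ : ℝ) (θ : Fin N → ℝ → ℝ) : Prop :=
  ∀ i : Fin N, ∀ t : ℝ, 0 ≤ t →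
    HasDerivAt (θ i)
      (ν i + (κ / N) * sens (θ i t) * ∑ j : Fin N, influence n (θ j t)) t

/-!
The cube `[-α, α]^N` is forward invariant. While the state lies in it, every influence `I_n(θ_j)`
is at least `I_n(α)`, so on the face `θ_i = α` the velocity of `θ_i` is at most
`ν_i - κ sin α I_n(α) < 0`. The face `θ_i = -α` is reduced to this one by the symmetry
`(θ, ν) ↦ (-θ, -ν)` of the model. A trajectory confined to a bounded set has rotation number zero.
-/

section Barrier

open Set Topology

lemma eventually_nhdsGT_le_of_hasDerivWithinAt {f : ℝ → ℝ} {f' x c : ℝ}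
    (hf : HasDerivWithinAt f f' (Ici x) x) (hx : f x ≤ c) (hc : f x = c → f' < 0) :
    ∀ᶠ y in 𝓝[>] x, f y ≤ c := by
  have hf := hf.Ioi_of_Ici
  rcases hx.lt_or_eq with hlt | heq
  · exact (hf.continuousWithinAt.eventually_lt_const hlt).mono fun _ ↦ le_of_lt
  · filter_upwards [hf.limsup_slope_le' self_notMem_Ioi (hc heq), self_mem_nhdsWithin]
      with y hslope hxy
    rw [slope_def_field, div_lt_iff₀ (sub_pos.2 hxy), zero_mul, sub_neg] at hslope
    exact hslope.le.trans hx

variable {ι : Type*} [Finite ι] {f f' : ι → ℝ → ℝ} {c : ι → ℝ} {a b : ℝ}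

lemma forall_le_of_hasDerivWithinAt_neg_of_eq
    (hf : ∀ i, ContinuousOn (f i) (Icc a b))
    (hf' : ∀ i, ∀ t ∈ Ico a b, HasDerivWithinAt (f i) (f' i t) (Ici t) t)
    (ha : ∀ i, f i a ≤ c i)
    (hc : ∀ t ∈ Ico a b, (∀ j, f j t ≤ c j) → ∀ i, f i t = c i → f' i t < 0) :
    ∀ t ∈ Icc a b, ∀ i, f i t ≤ c i := by
  have hclosed : IsClosed ({t | ∀ i, f i t ≤ c i} ∩ Icc a b) := by
    rw [inter_comm]
    exact isClosed_Icc.isClosed_le (continuousOn_pi.2 hf) continuousOn_const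
  refine hclosed.Icc_subset_of_forall_mem_nhdsWithin ha fun t ⟨hle, ht⟩ ↦ ?_
  exact eventually_all.2 fun i ↦
    eventually_nhdsGT_le_of_hasDerivWithinAt (hf' i t ht) (hle i) (hc t ht hle i)

lemma forall_abs_le_of_hasDerivWithinAt_of_eq
    (hf : ∀ i, ContinuousOn (f i) (Icc a b))
    (hf' : ∀ i, ∀ t ∈ Ico a b, HasDerivWithinAt (f i) (f' i t) (Ici t) t)
    (ha : ∀ i, |f i a| ≤ c i)
    (hupper : ∀ t ∈ Ico a b, (∀ j, |f j t| ≤ c j) → ∀ i, f i t = c i → f' i t < 0)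
    (hlower : ∀ t ∈ Ico a b, (∀ j, |f j t| ≤ c j) → ∀ i, f i t = -c i → 0 < f' i t) :
    ∀ t ∈ Icc a b, ∀ i, |f i t| ≤ c i := by
  have hsum : ∀ t ∈ Icc a b, ∀ k, Sum.elim f (-f) k t ≤ Sum.elim c c k := by
    refine forall_le_of_hasDerivWithinAt_neg_of_eq (f' := Sum.elim f' (-f')) ?_ ?_ ?_ ?_
    · exact Sum.forall.2 ⟨hf, fun i ↦ (hf i).neg⟩
    · exact Sum.forall.2 ⟨hf', fun i t ht ↦ (hf' i t ht).neg⟩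
    · exact Sum.forall.2 ⟨fun i ↦ (abs_le'.1 (ha i)).1, fun i ↦ (abs_le'.1 (ha i)).2⟩
    · intro t ht hle
      obtain ⟨hle_pos, hle_neg⟩ := Sum.forall.1 hle
      have habs : ∀ j, |f j t| ≤ c j := fun j ↦ abs_le'.2 ⟨hle_pos j, hle_neg j⟩
      exact Sum.forall.2 ⟨hupper t ht habs, fun i hi ↦
        neg_neg_iff_pos.2 (hlower t ht habs i (neg_eq_iff_eq_neg.1 hi))⟩
  intro t ht i
  exact abs_le'.2 ⟨hsum t ht (.inl i), hsum t ht (.inr i)⟩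

end Barrier

lemma aW_pos (n : ℕ) : 0 < aW n := by
  unfold aW
  positivity

lemma influence_neg (n : ℕ) (x : ℝ) : influence n (-x) = influence n x := by
  simp only [influence, cos_neg]

lemma sens_neg (x : ℝ) : sens (-x) = -sens x := by
  simp only [sens, sin_neg]

lemma influence_pos (n : ℕ) {x : ℝ} (hx : |x| < π) : 0 < influence n x := by
  have hcos : -1 < cos x := by
    simpa only [cos_pi, cos_abs] using cos_lt_cos_of_nonneg_of_le_pi (abs_nonneg x) le_rfl hx
  exact mul_pos (aW_pos n) (pow_pos (neg_lt_iff_pos_add'.1 hcos) n)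

lemma influence_le_influence_of_abs_le (n : ℕ) {x y : ℝ} (hxy : |x| ≤ |y|) (hy : |y| ≤ π) :
    influence n y ≤ influence n x := by
  have hcos : cos y ≤ cos x := by
    simpa only [cos_abs] using cos_le_cos_of_nonneg_of_le_pi (abs_nonneg x) hy hxy
  have hbase : 0 ≤ 1 + cos y := neg_le_iff_add_nonneg'.1 (neg_one_le_cos y)
  have ha := (aW_pos n).le
  unfold influence
  gcongr

/-- The velocity of oscillator `i` in the state `φ`: the right-hand side of the Winfree model of
order `n` with natural frequencies `ν` and coupling strength `κ`. -/
noncomputable def winfreeVelocity (n : ℕ) {N : ℕ} (ν : Fin N → ℝ) (κ : ℝ) (φ : Fin N → ℝ)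
    (i : Fin N) : ℝ :=
  ν i + (κ / N) * sens (φ i) * ∑ j, influence n (φ j)

section Winfree

variable {n N : ℕ} {ν : Fin N → ℝ} {κ α : ℝ}

lemma winfreeVelocity_neg_neg (φ : Fin N → ℝ) (i : Fin N) :
    winfreeVelocity n (-ν) κ (-φ) i = -winfreeVelocity n ν κ φ i := by
  simp only [winfreeVelocity, Pi.neg_apply, influence_neg, sens_neg]
  ring

lemma winfreeVelocity_lt_zero_of_eq {φ : Fin N → ℝ} {i : Fin N} (hκ : 0 ≤ κ) (hα0 : 0 ≤ α)
    (hαπ : α ≤ π) (hν : ν i < κ * (sin α * influence n α)) (hφ : ∀ j, |φ j| ≤ α)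
    (hi : φ i = α) : winfreeVelocity n ν κ φ i < 0 := by
  have hN : (N : ℝ) ≠ 0 := Nat.cast_ne_zero.2 i.pos.ne'
  have hsin : 0 ≤ sin α := sin_nonneg_of_nonneg_of_le_pi hα0 hαπ
  have hsum : N * influence n α ≤ ∑ j, influence n (φ j) := by
    have hle (j : Fin N) : influence n α ≤ influence n (φ j) :=
      influence_le_influence_of_abs_le n ((hφ j).trans (le_abs_self α)) (by rwa [abs_of_nonneg hα0])
    simpa using Finset.card_nsmul_le_sum Finset.univ _ _ fun j _ ↦ hle j
  calc winfreeVelocity n ν κ φ i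
      = ν i - κ / N * sin α * ∑ j, influence n (φ j) := by
        rw [winfreeVelocity, hi, sens]
        ring
    _ ≤ ν i - κ / N * sin α * (N * influence n α) := by gcongr
    _ = ν i - κ * (sin α * influence n α) := by field_simp
    _ < 0 := sub_neg.2 hν

theorem IsWinfreeSol.abs_le {θ : Fin N → ℝ → ℝ} (hθ : IsWinfreeSol n N ν κ θ) (hκ : 0 ≤ κ)
    (hα0 : 0 ≤ α) (hαπ : α ≤ π) (hν : ∀ i, |ν i| < κ * (sin α * influence n α))
    (hinit : ∀ i, |θ i 0| ≤ α) {t : ℝ} (ht : 0 ≤ t) (i : Fin N) : |θ i t| ≤ α := by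
  have hderiv (i : Fin N) (s : ℝ) (hs : 0 ≤ s) :
      HasDerivAt (θ i) (winfreeVelocity n ν κ (fun j ↦ θ j s) i) s := hθ i s hs
  refine forall_abs_le_of_hasDerivWithinAt_of_eq (c := fun _ ↦ α)
    (fun i s hs ↦ (hderiv i s hs.1).continuousAt.continuousWithinAt)
    (fun i s hs ↦ (hderiv i s hs.1).hasDerivWithinAt) hinit ?upper ?lower t ⟨ht, le_rfl⟩ i
  case upper =>
    intro s _ hs i hi
    exact winfreeVelocity_lt_zero_of_eq hκ hα0 hαπ (abs_lt.1 (hν i)).2 hs hi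
  case lower =>
    intro s _ hs i hi
    rw [← neg_neg_iff_pos, ← winfreeVelocity_neg_neg]
    exact winfreeVelocity_lt_zero_of_eq hκ hα0 hαπ (neg_lt.1 (abs_lt.1 (hν i)).1)
      (fun j ↦ (abs_neg _).trans_le (hs j)) (neg_eq_iff_eq_neg.2 hi)

end Winfree

/-- Death of rotation numbers: under the death framework every oscillator has
rotation number zero, i.e. `θ_i(t)/t → 0` as `t → ∞`. -/
theorem stmt10 (n N : ℕ) (hn : 0 < n) [NeZero N] (ν : Fin N → ℝ) (κ : ℝ)
    (θ : Fin N → ℝ → ℝ) (hθ : IsWinfreeSol n N ν κ θ)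
    (α : ℝ) (hα0 : 0 < α) (hαπ : α < Real.pi)
    (hinit : ∀ i : Fin N, |θ i 0| < α)
    (hκ : (⨆ i : Fin N, |ν i|) / (aW n * Real.sin α * (1 + Real.cos α) ^ n) < κ) :
    ∀ i : Fin N, Filter.Tendsto (fun t : ℝ => θ i t / t) Filter.atTop (nhds 0) := by
  have hthreshold : aW n * Real.sin α * (1 + Real.cos α) ^ n = sin α * influence n α := by
    unfold influence
    ring
  have hpos : 0 < sin α * influence n α :=
    mul_pos (sin_pos_of_pos_of_lt_pi hα0 hαπ) (influence_pos n (by rwa [abs_of_pos hα0]))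
  rw [hthreshold] at hκ
  have hκ0 : 0 ≤ κ :=
    (div_nonneg (Real.iSup_nonneg fun i ↦ abs_nonneg (ν i)) hpos.le).trans hκ.le
  have hν (i : Fin N) : |ν i| < κ * (sin α * influence n α) :=
    (le_ciSup (Set.finite_range fun i ↦ |ν i|).bddAbove i).trans_lt ((div_lt_iff₀ hpos).1 hκ)
  intro i
  have hbound : ∀ᶠ t in atTop, |θ i t| ≤ α := (eventually_ge_atTop 0).mono fun t ht ↦
    hθ.abs_le hκ0 hα0.le hαπ.le hν (fun j ↦ (hinit j).le) ht i
  exact tendsto_bdd_div_atTop_nhds_zero (hbound.mono fun _ h ↦ (abs_le.1 h).1)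
    (hbound.mono fun _ h ↦ (abs_le.1 h).2) tendsto_id
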